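/- Let u and v be two functions C² on an annular region between a C¹ surface ∂Ω_R (a large sphere of radius R) and small spheres around points s and m, both satisfying the radiating Helmholtz-type equation with coefficient field A_B (equal to a constant positive definite A outside a compact set) except for point sources at s and m respectively. Then the boundary bilinear concomitant ∫_{∂Ω_R} [ (n·A·∇u)·v − (n·A·∇v)·u ] dS tends to 0 as R → ∞ whenever u, v both satisfy the anisotropic radiation condition (r̂·A⁻¹·r̂)^{1/2}·r̂·A⁻¹·∇w(r) − iκ·w(r) = O(|r|⁻²) together with w(r) = O(|r|⁻¹). -/

import Mathlib

open scoped InnerProductSpace Topology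
open Matrix Filter MeasureTheory

noncomputable section

/-- The action of a `3×3` real matrix on a vector of `EuclideanSpace ℝ (Fin 3)`. -/
def matVec (A : Matrix (Fin 3) (Fin 3) ℝ) (x : EuclideanSpace ℝ (Fin 3)) :
    EuclideanSpace ℝ (Fin 3) :=
  (WithLp.equiv 2 (Fin 3 → ℝ)).symm (A *ᵥ (WithLp.equiv 2 (Fin 3 → ℝ) x))

/-- The anisotropic radiation-condition defect
`(r̂·A⁻¹·r̂)^{1/2}·r̂·A⁻¹·∇w(x) − iκ·w(x)` of a field `w` at a point `x` (with `r̂ = x/|x|`). -/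
def radiationDefect (A : Matrix (Fin 3) (Fin 3) ℝ) (κ : ℝ) (w : EuclideanSpace ℝ (Fin 3) → ℂ)
    (x : EuclideanSpace ℝ (Fin 3)) : ℂ :=
  ((Real.sqrt (⟪‖x‖⁻¹ • x, matVec A⁻¹ (‖x‖⁻¹ • x)⟫_ℝ) : ℝ) : ℂ) *
      fderiv ℝ w x (matVec A⁻¹ (‖x‖⁻¹ • x))
    - Complex.I * κ * w x

/-- A field `w` satisfies the radiating anisotropic Helmholtz equation
`−div(A·∇w) − κ²w = 0`, i.e. `∑ᵢⱼ Aᵢⱼ ∂ᵢ∂ⱼw + κ²w = 0`, at the point `x`. -/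
def SatisfiesHelmholtzAt (A : Matrix (Fin 3) (Fin 3) ℝ) (κ : ℝ)
    (w : EuclideanSpace ℝ (Fin 3) → ℂ) (x : EuclideanSpace ℝ (Fin 3)) : Prop :=
  (∑ i : Fin 3, ∑ j : Fin 3, (A i j : ℂ) *
      fderiv ℝ (fun y => fderiv ℝ w y (EuclideanSpace.single j 1)) x (EuclideanSpace.single i 1))
    + (κ : ℂ) ^ 2 * w x = 0

/-- Three-dimensional Euclidean space. -/
local notation "ESp" => EuclideanSpace ℝ (Fin 3)

lemma integral_fderiv_eq_zero_aux {h : ESp → ℂ} (hh : ContDiff ℝ 1 h) (hc : HasCompactSupport h)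
    (e : ESp) : ∫ x, fderiv ℝ h x e = 0 := by
  have hd : Continuous (fun x => fderiv ℝ h x e) :=
    (hh.continuous_fderiv (by norm_num)).clm_apply continuous_const
  have hcd : HasCompactSupport (fun x => fderiv ℝ h x e) := hc.fderiv_apply ℝ e
  have key := integral_mul_fderiv_eq_neg_fderiv_mul_of_integrable (μ := (volume : Measure ESp))
    (f := fun _ : ESp => (1 : ℂ)) (g := h) (v := e) (by simp)
    (by simpa using hd.integrable_of_hasCompactSupport hcd)
    (by simpa using hh.continuous.integrable_of_hasCompactSupport hc)
    (fun x _ => by fun_prop) (fun x _ => (hh.differentiable (by norm_num)) x)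
  simpa using key

lemma weak_div_aux {U K : Set ESp} (hU : IsOpen U) (hK : IsCompact K) (hKU : K ⊆ U)
    (φ : ESp → ℝ) (hφ : ContDiffOn ℝ 1 φ U) (hφ0 : ∀ x ∉ K, φ x = 0)
    (g : Fin 3 → ESp → ℂ) (hg : ∀ i, ContDiffOn ℝ 1 (g i) U)
    (hdiv : ∀ x ∈ U, ∑ i, fderiv ℝ (g i) x (EuclideanSpace.single i 1) = 0) :
    ∫ x, ∑ i, ((fderiv ℝ φ x (EuclideanSpace.single i 1) : ℝ) : ℂ) * g i x = 0 := by
  have hev : ∀ x ∉ K, φ =ᶠ[𝓝 x] fun _ => 0 := fun x hx => by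
    filter_upwards [hK.isClosed.isOpen_compl.mem_nhds hx] with y hy using hφ0 y hy
  have hcd : ∀ i, ContDiff ℝ 1 (fun x => (φ x : ℂ) * g i x) := by
    intro i
    rw [contDiff_iff_contDiffAt]
    intro x
    by_cases hx : x ∈ U
    · have h1 := (hφ.contDiffAt (hU.mem_nhds hx))
      have h2 := ((hg i).contDiffAt (hU.mem_nhds hx))
      exact (Complex.ofRealCLM.contDiff.contDiffAt.comp x h1).mul h2
    · have hxK : x ∉ K := fun h => hx (hKU h)
      have : (fun x => (φ x : ℂ) * g i x) =ᶠ[𝓝 x] fun _ => 0 := by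
        filter_upwards [hev x hxK] with y hy
        simp [hy]
      exact contDiffAt_const.congr_of_eventuallyEq this
  have hcs : ∀ i, HasCompactSupport (fun x => (φ x : ℂ) * g i x) := fun i =>
    HasCompactSupport.intro hK (fun x hx => by simp [hφ0 x hx])
  have hpt : ∀ x, ∑ i, ((fderiv ℝ φ x (EuclideanSpace.single i 1) : ℝ) : ℂ) * g i x
      = ∑ i, fderiv ℝ (fun x => (φ x : ℂ) * g i x) x (EuclideanSpace.single i 1) := by
    intro x
    by_cases hx : x ∈ U
    · have h1 : HasFDerivAt φ (fderiv ℝ φ x) x :=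
        ((hφ.contDiffAt (hU.mem_nhds hx)).differentiableAt (by norm_num)).hasFDerivAt
      have h2 : ∀ i, HasFDerivAt (g i) (fderiv ℝ (g i) x) x := fun i =>
        (((hg i).contDiffAt (hU.mem_nhds hx)).differentiableAt (by norm_num)).hasFDerivAt
      have h3 : HasFDerivAt (fun x => (φ x : ℂ)) (Complex.ofRealCLM.comp (fderiv ℝ φ x)) x :=
        Complex.ofRealCLM.hasFDerivAt.comp x h1
      have h4 : ∀ i, fderiv ℝ (fun x => (φ x : ℂ) * g i x) x (EuclideanSpace.single i 1) =
          (φ x : ℂ) * fderiv ℝ (g i) x (EuclideanSpace.single i 1) +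
          ((fderiv ℝ φ x (EuclideanSpace.single i 1) : ℝ) : ℂ) * g i x := by
        intro i
        have h6 : HasFDerivAt (fun x => (φ x : ℂ) * g i x) _ x := h3.mul (h2 i)
        rw [h6.fderiv]
        simp [mul_comm]
      simp_rw [h4]
      rw [Finset.sum_add_distrib, ← Finset.mul_sum, hdiv x hx]
      simp
    · have hxK : x ∉ K := fun h => hx (hKU h)
      have h0 := hev x hxK
      have h5 : ∀ i, (fun x => (φ x : ℂ) * g i x) =ᶠ[𝓝 x] fun _ => 0 := by
        intro i
        filter_upwards [hev x hxK] with y hy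
        simp [hy]
      rw [h0.fderiv_eq]
      refine Finset.sum_congr rfl fun i _ => ?_
      rw [(h5 i).fderiv_eq]
      simp
  simp_rw [hpt]
  rw [integral_finsetSum]
  · exact Finset.sum_eq_zero fun i _ => integral_fderiv_eq_zero_aux (hcd i) (hcs i) _
  · intro i _
    exact (((hcd i).continuous_fderiv (by norm_num)).clm_apply
      continuous_const).integrable_of_hasCompactSupport ((hcs i).fderiv_apply ℝ _)

lemma integral_polar_aux (f : ESp → ℂ) (hf : Integrable f) :
    ∫ x, f x = ∫ r in Set.Ioi (0 : ℝ), r ^ 2 • ∫ s : Metric.sphere (0 : ESp) 1, f (r • (s : ESp))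
      ∂((volume : Measure ESp).toSphere) := by
  have hmp := (volume : Measure ESp).measurePreserving_homeomorphUnitSphereProd
  have hemb := (homeomorphUnitSphereProd ESp).measurableEmbedding
  have hint : Integrable (fun x : Metric.sphere (0 : ESp) 1 × Set.Ioi (0 : ℝ) =>
      f ((x.2 : ℝ) • (x.1 : ESp)))
      ((volume : Measure ESp).toSphere.prod (Measure.volumeIoiPow (Module.finrank ℝ ESp - 1))) := by
    rw [← hmp.integrable_comp_emb hemb]
    have h1 : IntegrableOn f ({0}ᶜ : Set ESp) := hf.integrableOn
    rw [integrableOn_iff_comap_subtypeVal (measurableSet_singleton _).compl] at h1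
    refine h1.congr (Eventually.of_forall ?_)
    rintro ⟨x, hx⟩
    have hx' : ‖x‖ ≠ 0 := by simpa using hx
    simp [smul_smul, hx']
  calc ∫ x, f x = ∫ x : ({(0)}ᶜ : Set ESp), f x.1 ∂((volume : Measure ESp).comap (↑)) := by
        rw [integral_subtype_comap (measurableSet_singleton _).compl f,
          restrict_compl_singleton]
    _ = ∫ x, f ((x.2 : ℝ) • (x.1 : ESp)) ∂((volume : Measure ESp).toSphere.prod
          (Measure.volumeIoiPow (Module.finrank ℝ ESp - 1))) := by
      rw [← hmp.integral_comp hemb]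
      refine integral_congr_ae (Eventually.of_forall ?_)
      rintro ⟨x, hx⟩
      have hx' : ‖x‖ ≠ 0 := by simpa using hx
      simp [smul_smul, hx']
    _ = ∫ r : Set.Ioi (0 : ℝ), (∫ s : Metric.sphere (0 : ESp) 1, f ((r : ℝ) • (s : ESp))
          ∂((volume : Measure ESp).toSphere)) ∂(Measure.volumeIoiPow (Module.finrank ℝ ESp - 1)) :=
      integral_prod_symm _ hint
    _ = _ := by
      simp only [Measure.volumeIoiPow, ENNReal.ofReal]
      rw [integral_withDensity_eq_integral_smul,
        integral_subtype_comap measurableSet_Ioi fun a : ℝ ↦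
          Real.toNNReal (a ^ (Module.finrank ℝ ESp - 1)) •
          ∫ s : Metric.sphere (0 : ESp) 1, f (a • (s : ESp)) ∂((volume : Measure ESp).toSphere),
        setIntegral_congr_fun measurableSet_Ioi fun x hx ↦ ?_]
      · simp only [finrank_euclideanSpace, Fintype.card_fin]
        rw [NNReal.smul_def, Real.coe_toNNReal _ (pow_nonneg hx.out.le _)]
      · exact (measurable_subtype_coe.pow_const _).real_toNNReal

/-- The pointwise bilinear concomitant `(p·A·∇u) v − (p·A·∇v) u`. -/
def concAt (A : Matrix (Fin 3) (Fin 3) ℝ) (u v : ESp → ℂ) (x p : ESp) : ℂ :=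
  fderiv ℝ u x (matVec A p) * v x - fderiv ℝ v x (matVec A p) * u x

lemma matVec_eq_clm (A : Matrix (Fin 3) (Fin 3) ℝ) (x : ESp) :
    matVec A x = Matrix.toEuclideanCLM (𝕜 := ℝ) A x := rfl

lemma concAt_smul (A : Matrix (Fin 3) (Fin 3) ℝ) (u v : ESp → ℂ) (x p : ESp) (c : ℝ) :
    concAt A u v x (c • p) = (c : ℂ) * concAt A u v x p := by
  simp only [concAt, matVec_eq_clm, map_smul, Complex.real_smul]
  ring

lemma concAt_sub (A : Matrix (Fin 3) (Fin 3) ℝ) (u v : ESp → ℂ) (x p q : ESp) :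
    concAt A u v x (p - q) = concAt A u v x p - concAt A u v x q := by
  simp only [concAt, matVec_eq_clm, map_sub]
  ring

lemma fderiv_matVec (A : Matrix (Fin 3) (Fin 3) ℝ) (hAs : A.IsSymm) (L : ESp →L[ℝ] ℂ) (p : ESp) :
    L (matVec A p) = ∑ i, ∑ j, (p i : ℂ) * ((A i j : ℂ) * L (EuclideanSpace.single j 1)) := by
  have h : matVec A p = ∑ j, (∑ i, A i j * p i) • (EuclideanSpace.single j (1 : ℝ) : ESp) := by
    ext k
    have : ∀ j, A k j = A j k := fun j => hAs.apply j k
    simp [matVec, Matrix.mulVec, dotProduct, Finset.sum_apply, this]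
    fin_cases k <;> simp [Fin.sum_univ_three]
  rw [h]
  simp only [map_sum, map_smul, Complex.real_smul]
  rw [Finset.sum_comm]
  refine Finset.sum_congr rfl fun j _ => ?_
  push_cast
  rw [Finset.sum_mul]
  refine Finset.sum_congr rfl fun i _ => ?_
  ring

lemma weak_conc_aux {A : Matrix (Fin 3) (Fin 3) ℝ} (hAs : A.IsSymm) {κ : ℝ} {u v : ESp → ℂ}
    {U K : Set ESp} (hU : IsOpen U) (hK : IsCompact K) (hKU : K ⊆ U)
    (hu : ContDiffOn ℝ 2 u U) (hv : ContDiffOn ℝ 2 v U)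
    (hueq : ∀ x ∈ U, SatisfiesHelmholtzAt A κ u x)
    (hveq : ∀ x ∈ U, SatisfiesHelmholtzAt A κ v x)
    (φ : ESp → ℝ) (p : ESp → ESp) (hφ : ContDiffOn ℝ 1 φ U) (hφ0 : ∀ x ∉ K, φ x = 0)
    (hp : ∀ x ∈ U, HasFDerivAt φ (innerSL ℝ (p x)) x) (hp0 : ∀ x ∉ K, p x = 0) :
    ∫ x, concAt A u v x (p x) = 0 := by
  have hdu : ∀ j, ContDiffOn ℝ 1 (fun y => fderiv ℝ u y (EuclideanSpace.single j 1)) U := fun j =>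
    (hu.fderiv_of_isOpen hU (by norm_num)).clm_apply contDiffOn_const
  have hdv : ∀ j, ContDiffOn ℝ 1 (fun y => fderiv ℝ v y (EuclideanSpace.single j 1)) U := fun j =>
    (hv.fderiv_of_isOpen hU (by norm_num)).clm_apply contDiffOn_const
  have hu1 : ContDiffOn ℝ 1 u U := hu.of_le (by norm_num)
  have hv1 : ContDiffOn ℝ 1 v U := hv.of_le (by norm_num)
  let g : Fin 3 → ESp → ℂ := fun i x => ∑ j, (A i j : ℂ) *
    (fderiv ℝ u x (EuclideanSpace.single j 1) * v x
      - fderiv ℝ v x (EuclideanSpace.single j 1) * u x)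
  have hg : ∀ i, ContDiffOn ℝ 1 (g i) U := fun i =>
    ContDiffOn.sum fun j _ => contDiffOn_const.mul (((hdu j).mul hv1).sub ((hdv j).mul hu1))
  have hdiv : ∀ x ∈ U, ∑ i, fderiv ℝ (g i) x (EuclideanSpace.single i 1) = 0 := by
    intro x hx
    have D : ∀ {f : ESp → ℂ}, ContDiffOn ℝ 1 f U → HasFDerivAt f (fderiv ℝ f x) x := fun hf =>
      ((hf.contDiffAt (hU.mem_nhds hx)).differentiableAt (by norm_num)).hasFDerivAt
    have hgi : ∀ i, fderiv ℝ (g i) x (EuclideanSpace.single i 1) = ∑ j, (A i j : ℂ) *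
        (fderiv ℝ (fun y => fderiv ℝ u y (EuclideanSpace.single j 1)) x (EuclideanSpace.single i 1)
            * v x
          + fderiv ℝ u x (EuclideanSpace.single j 1) * fderiv ℝ v x (EuclideanSpace.single i 1)
          - fderiv ℝ (fun y => fderiv ℝ v y (EuclideanSpace.single j 1)) x
              (EuclideanSpace.single i 1) * u x
          - fderiv ℝ v x (EuclideanSpace.single j 1) *
              fderiv ℝ u x (EuclideanSpace.single i 1)) := by
      intro i
      have h1 : HasFDerivAt (g i) _ x := HasFDerivAt.fun_sum (u := Finset.univ) fun j _ =>
        ((((D (hdu j)).fun_mul (D hv1)).fun_sub ((D (hdv j)).fun_mul (D hu1))).const_mul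
          (A i j : ℂ))
      rw [h1.fderiv]
      simp only [_root_.sum_apply, _root_.smul_apply,
        _root_.sub_apply, _root_.add_apply, smul_eq_mul]
      refine Finset.sum_congr rfl fun j _ => ?_
      ring
    simp_rw [hgi]
    have e1 := hueq x hx
    have e2 := hveq x hx
    unfold SatisfiesHelmholtzAt at e1 e2
    have s01 : A 1 0 = A 0 1 := hAs.apply 0 1
    have s02 : A 2 0 = A 0 2 := hAs.apply 0 2
    have s12 : A 2 1 = A 1 2 := hAs.apply 1 2
    simp only [Fin.sum_univ_three, s01, s02, s12] at e1 e2 ⊢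
    linear_combination (v x) * e1 - (u x) * e2
  have key := weak_div_aux hU hK hKU φ hφ hφ0 g hg hdiv
  rw [← key]
  refine integral_congr_ae (Eventually.of_forall fun x => ?_)
  by_cases hx : x ∈ U
  · simp only [(hp x hx).fderiv]
    simp only [concAt, fderiv_matVec A hAs, innerSL_apply_apply, g]
    rw [Finset.sum_mul, Finset.sum_mul, ← Finset.sum_sub_distrib]
    refine Finset.sum_congr rfl fun i _ => ?_
    rw [Finset.sum_mul, Finset.sum_mul, ← Finset.sum_sub_distrib, Finset.mul_sum]
    refine Finset.sum_congr rfl fun j _ => ?_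
    have : inner ℝ (p x) (EuclideanSpace.single i (1 : ℝ)) = p x i := by
      simp [EuclideanSpace.inner_single_right]
    rw [this]
    ring
  · have hxK : x ∉ K := fun h => hx (hKU h)
    have h0 : φ =ᶠ[𝓝 x] fun _ => 0 := by
      filter_upwards [hK.isClosed.isOpen_compl.mem_nhds hxK] with y hy using hφ0 y hy
    simp [hp0 x hxK, h0.fderiv_eq, concAt, matVec_eq_clm]

lemma cutoff_exists_aux : ∃ (β : ℝ → ℝ) (C : ℝ), ContDiff ℝ 1 β ∧ (∀ t ≤ 1, β t = 1) ∧
    (∀ t, 2 ≤ t → β t = 0) ∧ (∀ t < 1, deriv β t = 0) ∧ (∀ t, 2 < t → deriv β t = 0) ∧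
    ∀ t, ‖deriv β t‖ ≤ C := by
  have hc : ContDiff ℝ 1 (fun t : ℝ => Real.smoothTransition (2 - t)) :=
    Real.smoothTransition.contDiff.comp (contDiff_const.sub contDiff_id)
  have h1 : ∀ t : ℝ, t ≤ 1 → Real.smoothTransition (2 - t) = 1 := fun t ht =>
    Real.smoothTransition.one_of_one_le (by linarith)
  have h2 : ∀ t : ℝ, 2 ≤ t → Real.smoothTransition (2 - t) = 0 := fun t ht =>
    Real.smoothTransition.zero_of_nonpos (by linarith)
  have h3 : ∀ t : ℝ, t < 1 → deriv (fun t : ℝ => Real.smoothTransition (2 - t)) t = 0 := by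
    intro t ht
    have : (fun t : ℝ => Real.smoothTransition (2 - t)) =ᶠ[𝓝 t] fun _ => 1 := by
      filter_upwards [Iio_mem_nhds ht] with y hy using h1 y (le_of_lt hy)
    rw [this.deriv_eq]
    simp
  have h4 : ∀ t : ℝ, 2 < t → deriv (fun t : ℝ => Real.smoothTransition (2 - t)) t = 0 := by
    intro t ht
    have : (fun t : ℝ => Real.smoothTransition (2 - t)) =ᶠ[𝓝 t] fun _ => 0 := by
      filter_upwards [Ioi_mem_nhds ht] with y hy using h2 y (le_of_lt hy)
    rw [this.deriv_eq]
    simp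
  have hd : Continuous (deriv (fun t : ℝ => Real.smoothTransition (2 - t))) :=
    hc.continuous_deriv (by norm_num)
  have hcs : HasCompactSupport (deriv (fun t : ℝ => Real.smoothTransition (2 - t))) := by
    refine HasCompactSupport.intro (K := Set.Icc 1 2) isCompact_Icc fun t ht => ?_
    by_cases h : t < 1
    · exact h3 t h
    · exact h4 t (not_le.1 fun h' => ht ⟨not_lt.1 h, h'⟩)
  obtain ⟨C, hC⟩ := hd.bounded_above_of_compact_support hcs
  exact ⟨_, C, hc, h1, h2, h3, h4, hC⟩

lemma integrable_of_zero_off_aux {U K : Set ESp} (hU : IsOpen U) (hK : IsCompact K) (hKU : K ⊆ U)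
    {f : ESp → ℂ} (hf : ContinuousOn f U) (hf0 : ∀ x ∉ K, f x = 0) : Integrable f := by
  have hcont : Continuous f := by
    rw [continuous_iff_continuousAt]
    intro x
    by_cases hx : x ∈ U
    · exact hf.continuousAt (hU.mem_nhds hx)
    · have : f =ᶠ[𝓝 x] fun _ => 0 := by
        filter_upwards [hK.isClosed.isOpen_compl.mem_nhds fun h => hx (hKU h)] with y hy
          using hf0 y hy
      exact continuousAt_const.congr this.symm
  exact hcont.integrable_of_hasCompactSupport (HasCompactSupport.intro hK hf0)

lemma concAt_continuousOn {A : Matrix (Fin 3) (Fin 3) ℝ} {u v : ESp → ℂ} {U : Set ESp}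
    (hU : IsOpen U) (hu : ContDiffOn ℝ 2 u U) (hv : ContDiffOn ℝ 2 v U)
    {X : Type*} [TopologicalSpace X] {S : Set X} {f q : X → ESp} (hf : ContinuousOn f S)
    (hfU : ∀ x ∈ S, f x ∈ U) (hq : ContinuousOn q S) :
    ContinuousOn (fun x => concAt A u v (f x) (q x)) S := by
  have h1 : ContinuousOn (fun x => fderiv ℝ u (f x)) S :=
    (hu.continuousOn_fderiv_of_isOpen hU (by norm_num)).comp hf hfU
  have h2 : ContinuousOn (fun x => fderiv ℝ v (f x)) S :=
    (hv.continuousOn_fderiv_of_isOpen hU (by norm_num)).comp hf hfU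
  have h3 : ContinuousOn (fun x => matVec A (q x)) S :=
    (Matrix.toEuclideanCLM (𝕜 := ℝ) A).continuous.comp_continuousOn hq
  exact ((h1.clm_apply h3).mul (hv.continuousOn.comp hf hfU)).sub
    ((h2.clm_apply h3).mul (hu.continuousOn.comp hf hfU))

lemma hasFDerivAt_norm_aux (x : ESp) (hx : x ≠ 0) :
    HasFDerivAt (fun y : ESp => ‖y‖) (innerSL ℝ (‖x‖⁻¹ • x)) x := by
  have h1 := (hasStrictFDerivAt_norm_sq x).hasFDerivAt.sqrt (by simpa using hx)
  have h2 : (fun y : ESp => √(‖y‖ ^ 2)) = fun y => ‖y‖ := by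
    ext y; exact Real.sqrt_sq (norm_nonneg y)
  rw [h2, Real.sqrt_sq (norm_nonneg x)] at h1
  refine h1.congr_fderiv ?_
  ext y
  simp
  ring

lemma test_integral_aux {A : Matrix (Fin 3) (Fin 3) ℝ} (hAs : A.IsSymm) {κ r₀ : ℝ}
    (hr₀ : 0 < r₀) {u v : ESp → ℂ}
    (hu : ContDiffOn ℝ 2 u {x | r₀ < ‖x‖}) (hv : ContDiffOn ℝ 2 v {x | r₀ < ‖x‖})
    (hueq : ∀ x, r₀ < ‖x‖ → SatisfiesHelmholtzAt A κ u x)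
    (hveq : ∀ x, r₀ < ‖x‖ → SatisfiesHelmholtzAt A κ v x)
    (B : ESp →L[ℝ] ESp) (hB : ∀ x y, ⟪B x, y⟫_ℝ = ⟪x, B y⟫_ℝ) {cA cB M : ℝ} (hcA0 : 0 < cA)
    (hcB0 : 0 < cB) (hcA : ∀ x, ‖x‖ ≤ cA * ‖B x‖) (hcB : ∀ x, ‖B x‖ ≤ cB * ‖x‖)
    (hM : ∀ x, r₀ < ‖x‖ → ‖concAt A u v x (B (B x))‖ ≤ M / ‖x‖ ^ 2)
    {χ : ℝ → ℝ} (hχ : Continuous χ) {a b : ℝ} (ha : r₀ < a) (hab : a ≤ b)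
    (hχa : ∀ t < a, χ t = 0) (hχb : ∀ t, b < t → χ t = 0) :
    Integrable (fun x => ((χ ‖x‖ * ‖x‖⁻¹ : ℝ) : ℂ) * concAt A u v x x) ∧
    ∫ x, ((χ ‖x‖ * ‖x‖⁻¹ : ℝ) : ℂ) * concAt A u v x x = 0 := by
  set U : Set ESp := {x | r₀ < ‖x‖} with hUdef
  have hU : IsOpen U := isOpen_lt continuous_const continuous_norm
  have hUne : ∀ x ∈ U, x ≠ 0 := by
    rintro x hx rfl
    simp [hUdef] at hx
    linarith
  have hKc : ∀ b' : ℝ, IsCompact {x : ESp | a ≤ ‖x‖ ∧ ‖x‖ ≤ b'} := by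
    intro b'
    refine (isCompact_closedBall (0 : ESp) b').of_isClosed_subset
      ((isClosed_le continuous_const continuous_norm).inter
        (isClosed_le continuous_norm continuous_const)) ?_
    intro x hx
    simpa using hx.2
  have hKU : ∀ b' : ℝ, {x : ESp | a ≤ ‖x‖ ∧ ‖x‖ ≤ b'} ⊆ U := fun b' x hx => lt_of_lt_of_le ha hx.1
  -- the first term
  have hT1c : ContinuousOn (fun x => ((χ ‖x‖ * ‖x‖⁻¹ : ℝ) : ℂ) * concAt A u v x x) U := by
    refine ContinuousOn.mul ?_ (concAt_continuousOn hU hu hv continuousOn_id (fun x hx => hx)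
      continuousOn_id)
    refine Complex.continuous_ofReal.comp_continuousOn ?_
    refine (hχ.comp continuous_norm).continuousOn.mul ?_
    exact continuous_norm.continuousOn.inv₀ fun x hx => norm_ne_zero_iff.2 (hUne x hx)
  have hT10 : ∀ x : ESp, ¬ (a ≤ ‖x‖ ∧ ‖x‖ ≤ b) → χ ‖x‖ = 0 := by
    intro x hx
    by_cases h : ‖x‖ < a
    · exact hχa _ h
    · exact hχb _ (not_le.1 fun h' => hx ⟨not_lt.1 h, h'⟩)
  have hT1 : Integrable (fun x => ((χ ‖x‖ * ‖x‖⁻¹ : ℝ) : ℂ) * concAt A u v x x) :=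
    integrable_of_zero_off_aux hU (hKc b) (hKU b) hT1c fun x hx => by simp [hT10 x hx]
  refine ⟨hT1, ?_⟩
  -- the radial primitive
  let α : ℝ → ℝ := fun t => ∫ s in b..t, χ s
  have hαd : ∀ t, HasDerivAt α (χ t) t := fun t =>
    intervalIntegral.integral_hasDerivAt_right (hχ.intervalIntegrable _ _)
      (hχ.stronglyMeasurableAtFilter _ _) hχ.continuousAt
  have hαc : ContDiff ℝ 1 α := by
    rw [contDiff_one_iff_deriv]
    refine ⟨fun t => (hαd t).differentiableAt, ?_⟩
    rw [show deriv α = χ from funext fun t => (hαd t).deriv]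
    exact hχ
  have hχb' : χ b = 0 := by
    have h1 : Tendsto χ (𝓝[>] b) (𝓝 (χ b)) := hχ.continuousAt.tendsto.mono_left inf_le_left
    have h2 : Tendsto χ (𝓝[>] b) (𝓝 0) := tendsto_const_nhds.congr' (by
      filter_upwards [self_mem_nhdsWithin] with y hy using (hχb y hy).symm)
    exact tendsto_nhds_unique h1 h2
  have hχa' : χ a = 0 := by
    have h1 : Tendsto χ (𝓝[<] a) (𝓝 (χ a)) := hχ.continuousAt.tendsto.mono_left inf_le_left
    have h2 : Tendsto χ (𝓝[<] a) (𝓝 0) := tendsto_const_nhds.congr' (by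
      filter_upwards [self_mem_nhdsWithin] with y hy using (hχa y hy).symm)
    exact tendsto_nhds_unique h1 h2
  have hαb : ∀ t, b ≤ t → α t = 0 := by
    intro t ht
    refine intervalIntegral.integral_zero_ae (Eventually.of_forall fun s hs => ?_)
    rw [Set.uIoc_of_le ht] at hs
    exact hχb s hs.1
  set c : ℝ := α a with hc
  have hαa : ∀ t, t ≤ a → α t = c := by
    intro t ht
    have h1 : α t + ∫ s in t..a, χ s = c :=
      intervalIntegral.integral_add_adjacent_intervals (hχ.intervalIntegrable _ _)
        (hχ.intervalIntegrable _ _)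
    have h2 : ∫ s in t..a, χ s = 0 := by
      refine intervalIntegral.integral_zero_ae (Eventually.of_forall fun s hs => ?_)
      rw [Set.uIoc_of_le ht] at hs
      rcases hs.2.lt_or_eq with h | h
      · exact hχa s h
      · rw [h, hχa']
    linarith
  obtain ⟨β, Cβ, hβc, hβ1, hβ2, hβ'1, hβ'2, hβC⟩ := cutoff_exists_aux
  have hCβ : 0 ≤ Cβ := (norm_nonneg _).trans (hβC 0)
  have hM0 : 0 ≤ M := by
    obtain ⟨y, hy⟩ := exists_norm_eq ESp (show 0 ≤ r₀ + 1 by linarith)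
    have h1 := hM y (by rw [hy]; linarith)
    have h2 : 0 ≤ M / ‖y‖ ^ 2 := (norm_nonneg _).trans h1
    by_contra hneg
    have : M / ‖y‖ ^ 2 < 0 := div_neg_of_neg_of_pos (not_le.1 hneg) (by rw [hy]; positivity)
    linarith
  set V : ℝ := (volume : Measure ESp).real (Metric.ball 0 1) with hV
  set D : ℝ := |c| * Cβ * 2 * M * cB ^ 2 * (8 * cA ^ 3) * V with hD
  have main : ∀ R : ℝ, cB * a < R →
      ‖∫ x, ((χ ‖x‖ * ‖x‖⁻¹ : ℝ) : ℂ) * concAt A u v x x‖ ≤ D / R := by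
    intro R hR
    have hR0 : 0 < R := lt_trans (mul_pos hcB0 (hr₀.trans ha)) hR
    let b' : ℝ := max b (2 * cA * R)
    let w : ESp → ℝ := fun x => c * deriv β (‖B x‖ ^ 2 / R ^ 2) * (2 / R ^ 2)
    have hsmall : ∀ x : ESp, ‖x‖ * cB < R → ‖B x‖ ^ 2 / R ^ 2 < 1 := by
      intro x hx
      rw [div_lt_one (by positivity)]
      have h1 : ‖B x‖ < R := by
        have := hcB x
        nlinarith
      exact pow_lt_pow_left₀ h1 (norm_nonneg _) (by norm_num)
    have hlarge : ∀ x : ESp, 2 * cA * R < ‖x‖ → 2 < ‖B x‖ ^ 2 / R ^ 2 := by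
      intro x hx
      rw [lt_div_iff₀ (by positivity)]
      have h1 : 2 * R < ‖B x‖ := by
        have := hcA x
        by_contra hcon
        have h3 : cA * ‖B x‖ ≤ cA * (2 * R) := mul_le_mul_of_nonneg_left (not_lt.1 hcon) hcA0.le
        nlinarith
      nlinarith
    have hw0 : ∀ x, ‖x‖ * cB < R ∨ 2 * cA * R < ‖x‖ → w x = 0 := by
      rintro x (h | h)
      · simp [w, hβ'1 _ (hsmall x h)]
      · simp [w, hβ'2 _ (hlarge x h)]
    have hwK : ∀ x : ESp, ¬ (a ≤ ‖x‖ ∧ ‖x‖ ≤ b') → w x = 0 := by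
      intro x hx
      apply hw0
      by_cases h : ‖x‖ < a
      · left
        nlinarith
      · right
        have : b' < ‖x‖ := not_le.1 fun h' => hx ⟨not_lt.1 h, h'⟩
        exact lt_of_le_of_lt (le_max_right _ _) this
    have hwc : Continuous w := by
      have : Continuous (deriv β) := hβc.continuous_deriv (by norm_num)
      fun_prop
    have hT2 : Integrable (fun x => (w x : ℂ) * concAt A u v x (B (B x))) := by
      refine integrable_of_zero_off_aux hU (hKc b') (hKU b') ?_ fun x hx => by simp [hwK x hx]
      exact (Complex.continuous_ofReal.comp hwc).continuousOn.mul
        (concAt_continuousOn hU hu hv continuousOn_id (fun x hx => hx)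
          (B.continuous.comp B.continuous).continuousOn)
    have hχK : ∀ x : ESp, ¬ (a ≤ ‖x‖ ∧ ‖x‖ ≤ b') → χ ‖x‖ = 0 := fun x hx =>
      hT10 x fun h => hx ⟨h.1, h.2.trans (le_max_left _ _)⟩
    have hzero := weak_conc_aux (A := A) hAs (κ := κ) hU (hKc b') (hKU b') hu hv hueq hveq
      (fun x => α ‖x‖ - c * β (‖B x‖ ^ 2 / R ^ 2))
      (fun x => (χ ‖x‖ * ‖x‖⁻¹) • x - w x • B (B x))
      (by
        refine ContDiffOn.sub ?_ ?_
        · intro x hx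
          exact (hαc.contDiffAt.comp x (contDiffAt_norm ℝ (hUne x hx))).contDiffWithinAt
        · refine ContDiff.contDiffOn ?_
          exact contDiff_const.mul (hβc.comp ((B.contDiff.norm_sq ℝ).div_const _)))
      (by
        intro x hx
        by_cases h : ‖x‖ < a
        · have h1 := hsmall x (by nlinarith)
          simp [hαa _ h.le, hβ1 _ h1.le]
        · have h1 : b' < ‖x‖ := not_le.1 fun h' => hx ⟨not_lt.1 h, h'⟩
          have h2 := hlarge x (lt_of_le_of_lt (le_max_right _ _) h1)
          simp [hαb _ ((le_max_left _ _).trans h1.le), hβ2 _ h2.le])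
      (by
        intro x hx
        have h1 := (hαd ‖x‖).comp_hasFDerivAt x (hasFDerivAt_norm_aux x (hUne x hx))
        have h2 : HasFDerivAt (fun y => ‖B y‖ ^ 2 / R ^ 2) _ x :=
          (B.hasFDerivAt (x := x)).norm_sq.mul_const ((R ^ 2)⁻¹)
        have h3 : HasDerivAt β (deriv β (‖B x‖ ^ 2 / R ^ 2)) (‖B x‖ ^ 2 / R ^ 2) :=
          ((hβc.differentiable (by norm_num)) _).hasDerivAt
        have h4 := (h3.comp_hasFDerivAt x h2).const_mul c
        refine (h1.fun_sub h4).congr_fderiv ?_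
        ext y
        simp [w, hB]
        ring)
      (by
        intro x hx
        simp [hχK x hx, hwK x hx])
    have heq : ∫ x, ((χ ‖x‖ * ‖x‖⁻¹ : ℝ) : ℂ) * concAt A u v x x
        = ∫ x, (w x : ℂ) * concAt A u v x (B (B x)) := by
      rw [← sub_eq_zero, ← integral_sub hT1 hT2, ← hzero]
      refine integral_congr_ae (Eventually.of_forall fun x => ?_)
      simp only [concAt_sub, concAt_smul]
    rw [heq]
    have hsupp : ∫ x, (w x : ℂ) * concAt A u v x (B (B x))
        = ∫ x in Metric.closedBall (0 : ESp) (2 * cA * R),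
            (w x : ℂ) * concAt A u v x (B (B x)) := by
      symm
      refine setIntegral_eq_integral_of_forall_compl_eq_zero fun x hx => ?_
      have : 2 * cA * R < ‖x‖ := by simpa using hx
      simp [hw0 x (Or.inr this)]
    rw [hsupp]
    have hbd : ∀ x ∈ Metric.closedBall (0 : ESp) (2 * cA * R),
        ‖(w x : ℂ) * concAt A u v x (B (B x))‖ ≤ |c| * Cβ * (2 / R ^ 2) * (M * cB ^ 2 / R ^ 2) := by
      intro x _
      by_cases h : ‖x‖ * cB < R
      · simp only [hw0 x (Or.inl h), Complex.ofReal_zero, zero_mul, norm_zero]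
        positivity
      · have h1 : R ≤ ‖x‖ * cB := not_lt.1 h
        have hax : a < ‖x‖ := by nlinarith
        have h0 : 0 < ‖x‖ := (hr₀.trans ha).trans hax
        rw [norm_mul]
        refine mul_le_mul ?_ ?_ (norm_nonneg _) (by positivity)
        · rw [Complex.norm_real]
          simp only [w, norm_mul]
          rw [Real.norm_eq_abs c, Real.norm_of_nonneg (show 0 ≤ 2 / R ^ 2 by positivity)]
          gcongr
          exact hβC _
        · refine (hM x (ha.trans hax)).trans ?_
          rw [div_le_div_iff₀ (by positivity) (by positivity), mul_assoc]
          refine mul_le_mul_of_nonneg_left ?_ hM0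
          rw [← mul_pow, mul_comm cB]
          gcongr
    refine (norm_setIntegral_le_of_norm_le_const measure_closedBall_lt_top hbd).trans ?_
    have hvol : (volume : Measure ESp).real (Metric.closedBall 0 (2 * cA * R))
        = (2 * cA * R) ^ 3 * V := by
      rw [Measure.addHaar_real_closedBall _ _ (by positivity)]
      simp [hV]
    rw [hvol, hD]
    apply le_of_eq
    field_simp
    ring
  have hlim : Tendsto (fun R : ℝ => D / R) atTop (𝓝 0) := tendsto_const_nhds.div_atTop tendsto_id
  have hle := ge_of_tendsto hlim ((eventually_gt_atTop (cB * a)).mono main)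
  exact norm_le_zero_iff.1 hle

lemma sqrt_lower_aux {A : Matrix (Fin 3) (Fin 3) ℝ} (hA : A.PosDef) :
    ∃ s₀ > 0, ∀ y : ESp, ‖y‖ = 1 → s₀ ≤ Real.sqrt (⟪y, matVec A⁻¹ y⟫_ℝ) := by
  have hpos : ∀ y : ESp, ‖y‖ = 1 → 0 < ⟪y, matVec A⁻¹ y⟫_ℝ := by
    intro y hy
    have hy0 : y.ofLp ≠ 0 := by
      intro h
      have : y = 0 := by ext i; simp [h]
      simp [this] at hy
    have h1 := hA.inv.dotProduct_mulVec_pos hy0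
    have h2 : ⟪y, matVec A⁻¹ y⟫_ℝ = star y.ofLp ⬝ᵥ (A⁻¹ *ᵥ y.ofLp) := by
      simp [matVec, EuclideanSpace.inner_eq_star_dotProduct, dotProduct_comm]
    rw [h2]
    exact h1
  have hcont : Continuous fun y : ESp => Real.sqrt (⟪y, matVec A⁻¹ y⟫_ℝ) := by
    simp only [matVec_eq_clm]
    fun_prop
  obtain ⟨y, hy, hmin⟩ := (isCompact_sphere (0 : ESp) 1).exists_isMinOn
    (NormedSpace.sphere_nonempty.2 zero_le_one) hcont.continuousOn
  refine ⟨_, Real.sqrt_pos.2 (hpos y (by simpa using hy)), fun z hz => ?_⟩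
  exact hmin (by simpa using hz)

lemma matVec_mul_inv {A : Matrix (Fin 3) (Fin 3) ℝ} (hA : A.PosDef) (x : ESp) :
    matVec A (matVec A⁻¹ x) = x := by
  have hdet : IsUnit A.det := (Matrix.isUnit_iff_isUnit_det A).1 hA.isUnit
  simp [matVec, Matrix.mulVec_mulVec, Matrix.mul_nonsing_inv A hdet]

lemma conc_bound_aux {A : Matrix (Fin 3) (Fin 3) ℝ} (hA : A.PosDef) {κ r₀ : ℝ} (hr₀ : 0 < r₀)
    {u v : ESp → ℂ}
    (hrad : ∃ C : ℝ, ∀ x, r₀ < ‖x‖ →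
      ‖radiationDefect A κ u x‖ ≤ C / ‖x‖ ^ 2 ∧ ‖radiationDefect A κ v x‖ ≤ C / ‖x‖ ^ 2)
    (hdecay : ∃ C : ℝ, ∀ x, r₀ < ‖x‖ → ‖u x‖ ≤ C / ‖x‖ ∧ ‖v x‖ ≤ C / ‖x‖) :
    ∃ M : ℝ, ∀ x, r₀ < ‖x‖ →
      ‖concAt A u v x (matVec A⁻¹ (matVec A⁻¹ x))‖ ≤ M / ‖x‖ ^ 2 := by
  obtain ⟨C, hC⟩ := hrad
  obtain ⟨C', hC'⟩ := hdecay
  obtain ⟨s₀, hs₀, hs⟩ := sqrt_lower_aux hA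
  refine ⟨2 * C * C' / s₀, fun x hx => ?_⟩
  have hx0 : 0 < ‖x‖ := hr₀.trans hx
  have hunit : ‖‖x‖⁻¹ • x‖ = 1 := by
    rw [norm_smul, norm_inv, norm_norm, inv_mul_cancel₀ hx0.ne']
  have hsx := hs _ hunit
  obtain ⟨hdu, hdv⟩ := hC x hx
  obtain ⟨hu, hv⟩ := hC' x hx
  set s : ℝ := Real.sqrt (⟪‖x‖⁻¹ • x, matVec A⁻¹ (‖x‖⁻¹ • x)⟫_ℝ) with hsdef
  have hscale : matVec A⁻¹ x = ‖x‖ • matVec A⁻¹ (‖x‖⁻¹ • x) := by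
    simp only [matVec_eq_clm, map_smul, smul_smul, mul_inv_cancel₀ hx0.ne', one_smul]
  have key : (s : ℂ) * concAt A u v x (matVec A⁻¹ (matVec A⁻¹ x)) =
      (‖x‖ : ℂ) * (radiationDefect A κ u x * v x - radiationDefect A κ v x * u x) := by
    simp only [concAt, matVec_mul_inv hA, radiationDefect]
    rw [← hsdef, hscale]
    simp only [map_smul, Complex.real_smul]
    ring
  have hn := congrArg norm key
  rw [norm_mul, norm_mul, Complex.norm_real, Complex.norm_real, norm_norm,
    Real.norm_of_nonneg (hs₀.le.trans hsx)] at hn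
  have h1 : ‖radiationDefect A κ u x * v x - radiationDefect A κ v x * u x‖
      ≤ 2 * (C / ‖x‖ ^ 2 * (C' / ‖x‖)) := by
    refine (norm_sub_le _ _).trans ?_
    rw [norm_mul, norm_mul]
    have e1 := mul_le_mul hdu hv (norm_nonneg _) ((norm_nonneg _).trans hdu)
    have e2 := mul_le_mul hdv hu (norm_nonneg _) ((norm_nonneg _).trans hdv)
    linarith
  have h2 : s₀ * ‖concAt A u v x (matVec A⁻¹ (matVec A⁻¹ x))‖
      ≤ ‖x‖ * (2 * (C / ‖x‖ ^ 2 * (C' / ‖x‖))) :=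
    (mul_le_mul_of_nonneg_right hsx (norm_nonneg _)).trans
      (hn.le.trans (mul_le_mul_of_nonneg_left h1 hx0.le))
  rw [← mul_le_mul_iff_right₀ hs₀]
  refine h2.trans (le_of_eq ?_)
  field_simp

lemma support_bounds_aux {χ : ℝ → ℝ} {r₀ : ℝ} (hcs : HasCompactSupport χ)
    (hsub : tsupport χ ⊆ Set.Ioi r₀) :
    ∃ a b : ℝ, r₀ < a ∧ a ≤ b ∧ (∀ t < a, χ t = 0) ∧ ∀ t, b < t → χ t = 0 := by
  rcases (tsupport χ).eq_empty_or_nonempty with h | h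
  · have h0 : ∀ t, χ t = 0 := fun t => image_eq_zero_of_notMem_tsupport (by simp [h])
    exact ⟨r₀ + 1, r₀ + 1, by linarith, le_rfl, fun t _ => h0 t, fun t _ => h0 t⟩
  · obtain ⟨a, ha⟩ := IsCompact.exists_isLeast hcs h
    obtain ⟨b, hb⟩ := IsCompact.exists_isGreatest hcs h
    refine ⟨a, b, hsub ha.1, ha.2 hb.1, fun t ht => ?_, fun t ht => ?_⟩
    · exact image_eq_zero_of_notMem_tsupport fun hm => absurd (ha.2 hm) (not_le.2 ht)
    · exact image_eq_zero_of_notMem_tsupport fun hm => absurd (hb.2 hm) (not_le.2 ht)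

/-- Vanishing of the boundary bilinear concomitant: if `u, v` are `C²` outside a ball of
radius `r₀` (containing the point sources and the inhomogeneity), satisfy the constant
coefficient anisotropic Helmholtz equation there, the anisotropic radiation condition with
`O(|r|⁻²)` defect, and are `O(|r|⁻¹)`, then
`∫_{∂Ω_R} [(n·A·∇u)·v − (n·A·∇v)·u] dS → 0` as `R → ∞`. -/
theorem boundary_concomitant_tendsto_zero
    (A : Matrix (Fin 3) (Fin 3) ℝ) (hA : A.PosDef) (hAs : A.IsSymm)
    (κ : ℝ) (hκ : 0 < κ) (r₀ : ℝ) (hr₀ : 0 < r₀)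
    (u v : EuclideanSpace ℝ (Fin 3) → ℂ)
    (hu : ContDiffOn ℝ 2 u {x | r₀ < ‖x‖}) (hv : ContDiffOn ℝ 2 v {x | r₀ < ‖x‖})
    (hueq : ∀ x, r₀ < ‖x‖ → SatisfiesHelmholtzAt A κ u x)
    (hveq : ∀ x, r₀ < ‖x‖ → SatisfiesHelmholtzAt A κ v x)
    (hrad : ∃ C : ℝ, ∀ x, r₀ < ‖x‖ →
      ‖radiationDefect A κ u x‖ ≤ C / ‖x‖ ^ 2 ∧ ‖radiationDefect A κ v x‖ ≤ C / ‖x‖ ^ 2)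
    (hdecay : ∃ C : ℝ, ∀ x, r₀ < ‖x‖ → ‖u x‖ ≤ C / ‖x‖ ∧ ‖v x‖ ≤ C / ‖x‖) :
    Tendsto
      (fun R : ℝ =>
        ∫ s : Metric.sphere (0 : EuclideanSpace ℝ (Fin 3)) 1,
          (R ^ 2 : ℂ) *
            (fderiv ℝ u (R • (s : EuclideanSpace ℝ (Fin 3)))
                (matVec A (s : EuclideanSpace ℝ (Fin 3))) *
                v (R • (s : EuclideanSpace ℝ (Fin 3)))
              - fderiv ℝ v (R • (s : EuclideanSpace ℝ (Fin 3)))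
                  (matVec A (s : EuclideanSpace ℝ (Fin 3))) *
                  u (R • (s : EuclideanSpace ℝ (Fin 3))))
          ∂((volume : Measure (EuclideanSpace ℝ (Fin 3))).toSphere))
      atTop (𝓝 0) := by
  obtain ⟨M, hM⟩ := conc_bound_aux hA hr₀ hrad hdecay
  have hU : IsOpen {x : ESp | r₀ < ‖x‖} := isOpen_lt continuous_const continuous_norm
  set F : ℝ → ℂ := fun R : ℝ => ∫ s : Metric.sphere (0 : ESp) 1,
    (R ^ 2 : ℂ) * concAt A u v (R • (s : ESp)) (s : ESp) ∂((volume : Measure ESp).toSphere) with hF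
  change Tendsto F atTop (𝓝 0)
  have hBsymm : ∀ x y : ESp, ⟪Matrix.toEuclideanCLM (𝕜 := ℝ) A⁻¹ x, y⟫_ℝ
      = ⟪x, Matrix.toEuclideanCLM (𝕜 := ℝ) A⁻¹ y⟫_ℝ := by
    have hs : (A⁻¹)ᵀ = A⁻¹ := by rw [Matrix.transpose_nonsing_inv, hAs.eq]
    intro x y
    rw [← matVec_eq_clm, ← matVec_eq_clm]
    simp only [matVec, EuclideanSpace.inner_eq_star_dotProduct, star_trivial,
      WithLp.equiv_symm_apply, WithLp.equiv_apply]
    rw [Matrix.dotProduct_mulVec, ← Matrix.mulVec_transpose, hs, dotProduct_comm]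
  have hFc : ContinuousOn F (Set.Ioi r₀) := by
    refine continuousOn_integral_of_compact_support (k := Set.univ) isCompact_univ ?_
      (fun p x _ hx => absurd (Set.mem_univ x) hx)
    refine ContinuousOn.mul (by fun_prop) ?_
    refine concAt_continuousOn hU hu hv (by fun_prop) ?_ (by fun_prop)
    rintro ⟨R, s⟩ ⟨hR, -⟩
    have hR' : r₀ < R := hR
    simp [norm_smul, abs_of_pos (hr₀.trans hR'), hR']
  have hae : ∀ᵐ R ∂(volume : Measure ℝ), R ∈ Set.Ioi r₀ → F R = 0 := by
    refine isOpen_Ioi.ae_eq_zero_of_integral_contDiff_smul_eq_zero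
      (hFc.locallyIntegrableOn measurableSet_Ioi) ?_
    intro χ hχ hcs hsub
    obtain ⟨a, b, ha, hab, hχa, hχb⟩ := support_bounds_aux hcs hsub
    obtain ⟨hint, hzero⟩ := test_integral_aux (A := A) hAs (κ := κ) hr₀ hu hv hueq hveq
      (Matrix.toEuclideanCLM (𝕜 := ℝ) A⁻¹) hBsymm
      (cA := ‖Matrix.toEuclideanCLM (𝕜 := ℝ) A‖ + 1)
      (cB := ‖Matrix.toEuclideanCLM (𝕜 := ℝ) A⁻¹‖ + 1) (M := M) (by positivity) (by positivity)
      (fun x => by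
        have h1 := (Matrix.toEuclideanCLM (𝕜 := ℝ) A).le_opNorm (matVec A⁻¹ x)
        rw [← matVec_eq_clm, matVec_mul_inv hA] at h1
        rw [← matVec_eq_clm]
        nlinarith [norm_nonneg (matVec A⁻¹ x)])
      (fun x => by
        have h1 := (Matrix.toEuclideanCLM (𝕜 := ℝ) A⁻¹).le_opNorm x
        nlinarith [norm_nonneg x])
      hM hχ.continuous ha hab hχa hχb
    rw [integral_polar_aux _ hint] at hzero
    rw [← hzero, ← setIntegral_eq_integral_of_forall_compl_eq_zero (s := Set.Ioi (0 : ℝ))]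
    · refine setIntegral_congr_fun measurableSet_Ioi fun r hr => ?_
      have hr' : 0 < r := hr
      simp only [hF]
      rw [← integral_smul, ← integral_smul]
      refine integral_congr_ae (Eventually.of_forall fun s => ?_)
      have hs1 : ‖(s : ESp)‖ = 1 := by simp
      simp only [norm_smul, hs1, Real.norm_of_nonneg hr'.le, mul_one, Complex.real_smul,
        concAt_smul]
      push_cast
      have : (r : ℂ) ≠ 0 := by exact_mod_cast hr'.ne'
      field_simp
    · intro r hr
      have : r < a := by
        have : r ≤ 0 := by simpa using hr
        linarith
      simp [hχa r this]
  have hEq : Set.EqOn F (fun _ => 0) (Set.Ioi r₀) := by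
    refine Measure.eqOn_open_of_ae_eq (μ := volume) ?_ isOpen_Ioi hFc continuousOn_const
    exact (ae_restrict_iff' measurableSet_Ioi).2 hae
  refine tendsto_const_nhds.congr' ?_
  filter_upwards [eventually_gt_atTop r₀] with R hR using (hEq hR).symm

end
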